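/- Let N₁, N₂, m, r be positive integers and let γ ≥ 1 be a real number. Set s := 100·γ⁴·r and t := 800·γ¹²·s, and assume t + s + r ≤ min{N₁, N₂}. Suppose the linear map 𝓐 : ℝ^{N₁×N₂} → ℝ^m satisfies the modified rank-restricted isometry property of order t + s + r with constants 0 < α ≤ β such that β/α ≤ γ. Let X ∈ ℝ^{N₁×N₂} with rank(X) ≤ r, let e ∈ ℝ^m, and let y := 𝓐(X) + e. Let X_c ∈ ℝ^{N₁×N₂} with rank(X_c) ≤ s, let W be a best rank-t approximation of 𝓐*(sgn(y − 𝓐(X_c))), set μ := ‖y − 𝓐(X_c)‖₁ / max{‖W‖_F², (1/(4γ²))·‖𝓐(W)‖₁²/‖W‖_F²} if W ≠ 0 and μ := 0 otherwise, and let X' be a best rank-s approximation of X_c + μ·W. Then ‖X − X'‖_F ≤ ρ·‖X − X_c‖_F + d'·‖e‖₁, where ρ := 1 − (3 − 2√2)/(10·γ²), ρ' := 1 + √(8r/(s+r)), and d' := 96·ρ'·γ⁸/β. -/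

import Mathlib

noncomputable def frobNorm {N₁ N₂ : ℕ} (Z : Matrix (Fin N₁) (Fin N₂) ℝ) : ℝ :=
  Real.sqrt (∑ i, ∑ j, (Z i j) ^ 2)

def frobInner {N₁ N₂ : ℕ} (A B : Matrix (Fin N₁) (Fin N₂) ℝ) : ℝ :=
  ∑ i, ∑ j, A i j * B i j

def l1norm {m : ℕ} (v : Fin m → ℝ) : ℝ := ∑ i, |v i|

noncomputable def sgnVec {m : ℕ} (v : Fin m → ℝ) : Fin m → ℝ := fun i => Real.sign (v i)

def IsBestRankApprox {N₁ N₂ : ℕ} (k : ℕ) (Z H : Matrix (Fin N₁) (Fin N₂) ℝ) : Prop :=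
  H.rank ≤ k ∧
    ∀ W : Matrix (Fin N₁) (Fin N₂) ℝ, W.rank ≤ k → frobNorm (Z - H) ≤ frobNorm (Z - W)
open scoped Classical
open Matrix in
lemma frobNorm_sq {N₁ N₂ : ℕ} (Z : Matrix (Fin N₁) (Fin N₂) ℝ) :
    frobNorm Z ^ 2 = frobInner Z Z := by
  unfold frobNorm frobInner
  rw [Real.sq_sqrt (by positivity)]
  simp [sq]

lemma frobNorm_nonneg {N₁ N₂ : ℕ} (Z : Matrix (Fin N₁) (Fin N₂) ℝ) : 0 ≤ frobNorm Z :=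
  Real.sqrt_nonneg _

lemma fi_add_left {N₁ N₂ : ℕ} (A B C : Matrix (Fin N₁) (Fin N₂) ℝ) :
    frobInner (A + B) C = frobInner A C + frobInner B C := by
  simp [frobInner, add_mul, Finset.sum_add_distrib]

lemma fi_sub_left {N₁ N₂ : ℕ} (A B C : Matrix (Fin N₁) (Fin N₂) ℝ) :
    frobInner (A - B) C = frobInner A C - frobInner B C := by
  simp [frobInner, sub_mul, Finset.sum_sub_distrib]

lemma fi_smul_left {N₁ N₂ : ℕ} (c : ℝ) (A C : Matrix (Fin N₁) (Fin N₂) ℝ) :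
    frobInner (c • A) C = c * frobInner A C := by
  simp [frobInner, mul_assoc, Finset.mul_sum]

lemma fi_comm {N₁ N₂ : ℕ} (A C : Matrix (Fin N₁) (Fin N₂) ℝ) :
    frobInner A C = frobInner C A := by
  simp [frobInner, mul_comm]

lemma fi_add_right {N₁ N₂ : ℕ} (A B C : Matrix (Fin N₁) (Fin N₂) ℝ) :
    frobInner C (A + B) = frobInner C A + frobInner C B := by
  rw [fi_comm, fi_add_left, fi_comm A, fi_comm B]

lemma fi_sub_right {N₁ N₂ : ℕ} (A B C : Matrix (Fin N₁) (Fin N₂) ℝ) :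
    frobInner C (A - B) = frobInner C A - frobInner C B := by
  rw [fi_comm, fi_sub_left, fi_comm A, fi_comm B]

lemma fi_smul_right {N₁ N₂ : ℕ} (c : ℝ) (A C : Matrix (Fin N₁) (Fin N₂) ℝ) :
    frobInner C (c • A) = c * frobInner C A := by
  rw [fi_comm, fi_smul_left, fi_comm]

lemma fi_self_nonneg {N₁ N₂ : ℕ} (A : Matrix (Fin N₁) (Fin N₂) ℝ) : 0 ≤ frobInner A A := by
  rw [← frobNorm_sq]; positivity

lemma fi_self_eq_zero {N₁ N₂ : ℕ} (A : Matrix (Fin N₁) (Fin N₂) ℝ) (h : frobInner A A = 0) :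
    A = 0 := by
  have h1 := (Finset.sum_eq_zero_iff_of_nonneg
    (fun i _ => Finset.sum_nonneg (fun j _ => mul_self_nonneg (A i j)))).1 h
  ext i j
  have h2 := (Finset.sum_eq_zero_iff_of_nonneg (fun j _ => mul_self_nonneg (A i j))).1
    (h1 i (Finset.mem_univ _)) j (Finset.mem_univ _)
  simpa using h2

lemma fi_cs {N₁ N₂ : ℕ} (A B : Matrix (Fin N₁) (Fin N₂) ℝ) :
    frobInner A B ≤ frobNorm A * frobNorm B := by
  have h : frobInner A B ^ 2 ≤ (frobNorm A * frobNorm B) ^ 2 := by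
    rw [mul_pow, frobNorm_sq, frobNorm_sq]
    unfold frobInner
    simp only [← Finset.sum_product']
    have := Finset.sum_mul_sq_le_sq_mul_sq (Finset.univ ×ˢ Finset.univ)
      (fun p : Fin N₁ × Fin N₂ => A p.1 p.2) (fun p => B p.1 p.2)
    simpa [sq] using this
  exact (abs_le_of_sq_le_sq' h (mul_nonneg (frobNorm_nonneg _) (frobNorm_nonneg _))).2

lemma fn_add {N₁ N₂ : ℕ} (A B : Matrix (Fin N₁) (Fin N₂) ℝ) :
    frobNorm (A + B) ≤ frobNorm A + frobNorm B := by
  refine (abs_le_of_sq_le_sq' ?_ (add_nonneg (frobNorm_nonneg _) (frobNorm_nonneg _))).2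
  rw [frobNorm_sq, fi_add_left, fi_add_right, fi_add_right, fi_comm B A, add_sq,
    frobNorm_sq, frobNorm_sq]
  linarith [fi_cs A B]

lemma fi_mul_left {N₁ N₂ n : ℕ} (D : Matrix (Fin N₁) (Fin N₂) ℝ) (H : Matrix (Fin N₁) (Fin n) ℝ)
    (Q : Matrix (Fin n) (Fin N₂) ℝ) :
    frobInner D (H * Q) = frobInner (H.transpose * D) Q := by
  unfold frobInner
  simp only [Matrix.mul_apply, Matrix.transpose_apply, Finset.mul_sum, Finset.sum_mul]
  rw [Finset.sum_comm]
  conv_rhs => rw [Finset.sum_comm]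
  refine Finset.sum_congr rfl fun j _ => ?_
  rw [Finset.sum_comm]
  refine Finset.sum_congr rfl fun k _ => Finset.sum_congr rfl fun i _ => by ring

open Matrix in
lemma fi_vecMulVec {N₁ N₂ : ℕ} (D : Matrix (Fin N₁) (Fin N₂) ℝ) (a : Fin N₁ → ℝ)
    (b : Fin N₂ → ℝ) : frobInner D (vecMulVec a b) = a ⬝ᵥ (D *ᵥ b) := by
  unfold frobInner
  simp only [vecMulVec_apply, dotProduct, mulVec, Finset.mul_sum]
  refine Finset.sum_congr rfl fun k _ => Finset.sum_congr rfl fun i _ => by ring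

open Matrix in
lemma vecMulVec_mulVec' {N₁ N₂ : ℕ} (a : Fin N₁ → ℝ)
    (b c : Fin N₂ → ℝ) : vecMulVec a b *ᵥ c = (b ⬝ᵥ c) • a := by
  ext i
  simp only [vecMulVec_apply, dotProduct, mulVec, Pi.smul_apply, smul_eq_mul, Finset.sum_mul]
  refine Finset.sum_congr rfl fun k _ => by ring

/-- first order optimality -/
lemma best_orth {N₁ N₂ k : ℕ} {V H : Matrix (Fin N₁) (Fin N₂) ℝ} (h : IsBestRankApprox k V H) :
    H.transpose * (V - H) = 0 := by
  obtain ⟨D, hD⟩ : ∃ D, D = V - H := ⟨_, rfl⟩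
  rw [← hD]
  set Q := H.transpose * D with hQ
  have key : ∀ c : ℝ, 0 ≤ c ^ 2 * frobInner (H * Q) (H * Q) - 2 * c * frobInner Q Q := by
    intro c
    have h1 : (H + c • (H * Q)).rank ≤ k := by
      have : H + c • (H * Q) = H * (1 + c • Q) := by
        rw [Matrix.mul_add, Matrix.mul_one, Matrix.mul_smul]
      rw [this]
      exact (Matrix.rank_mul_le_left _ _).trans h.1
    have h2 := h.2 _ h1
    have h3 : V - (H + c • (H * Q)) = D - c • (H * Q) := by rw [hD]; abel
    rw [h3, ← hD] at h2
    have h4 := pow_le_pow_left₀ (frobNorm_nonneg _) h2 2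
    rw [frobNorm_sq, frobNorm_sq, fi_sub_left, fi_sub_right, fi_sub_right, fi_smul_left,
      fi_smul_right, fi_smul_right, fi_comm (H * Q) D, fi_mul_left D H Q, ← hQ, fi_smul_left] at h4
    nlinarith
  apply fi_self_eq_zero
  by_contra hne
  have hpos : 0 < frobInner Q Q := lt_of_le_of_ne (fi_self_nonneg _) (Ne.symm hne)
  have hn := fi_self_nonneg (H * Q)
  set p := frobInner (H * Q) (H * Q)
  set q := frobInner Q Q
  have := key (q / (p + q))
  have hpq : 0 < p + q := by linarith
  have e1 : (q / (p + q)) ^ 2 * p - 2 * (q / (p + q)) * q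
      = (q / (p + q)) * q * ((p / (p + q)) - 2) := by field_simp
  rw [e1] at this
  have h5 : p / (p + q) ≤ 1 := by rw [div_le_one hpq]; linarith
  have h6 : 0 < (q / (p + q)) * q := by positivity
  nlinarith

def rowE {N₁ N₂ : ℕ} (M : Matrix (Fin N₁) (Fin N₂) ℝ) (i : Fin N₁) : EuclideanSpace ℝ (Fin N₂) :=
  WithLp.toLp 2 (M i)

noncomputable def rowS {N₁ N₂ : ℕ} (M : Matrix (Fin N₁) (Fin N₂) ℝ) :
    Submodule ℝ (EuclideanSpace ℝ (Fin N₂)) :=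
  Submodule.span ℝ (Set.range (rowE M))

lemma rowS_finrank {N₁ N₂ : ℕ} (M : Matrix (Fin N₁) (Fin N₂) ℝ) :
    Module.finrank ℝ (rowS M) = M.rank := by
  rw [Matrix.rank_eq_finrank_span_row]
  have : rowS M = (Submodule.span ℝ (Set.range M.row)).map
      (WithLp.linearEquiv 2 ℝ (Fin N₂ → ℝ)).symm.toLinearMap := by
    rw [Submodule.map_span, rowS, ← Set.range_comp]
    rfl
  rw [this]
  exact LinearEquiv.finrank_map_eq (WithLp.linearEquiv 2 ℝ (Fin N₂ → ℝ)).symm _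

lemma rank_add_le_aux {N₁ N₂ : ℕ} (A B : Matrix (Fin N₁) (Fin N₂) ℝ) :
    (A + B).rank ≤ A.rank + B.rank := by
  rw [← rowS_finrank, ← rowS_finrank, ← rowS_finrank]
  refine le_trans (Submodule.finrank_mono ?_) (Submodule.finrank_add_le_finrank_add_finrank _ _)
  refine Submodule.span_le.2 ?_
  rintro _ ⟨i, rfl⟩
  have : rowE (A + B) i = rowE A i + rowE B i := rfl
  rw [this]
  exact Submodule.add_mem_sup (Submodule.subset_span ⟨i, rfl⟩) (Submodule.subset_span ⟨i, rfl⟩)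

lemma rank_sub_le_aux {N₁ N₂ : ℕ} (A B : Matrix (Fin N₁) (Fin N₂) ℝ) :
    (A - B).rank ≤ A.rank + B.rank := by
  rw [← rowS_finrank, ← rowS_finrank, ← rowS_finrank]
  refine le_trans (Submodule.finrank_mono ?_) (Submodule.finrank_add_le_finrank_add_finrank _ _)
  refine Submodule.span_le.2 ?_
  rintro _ ⟨i, rfl⟩
  have : rowE (A - B) i = rowE A i - rowE B i := rfl
  rw [this, SetLike.mem_coe]
  exact Submodule.sub_mem _ (Submodule.mem_sup_left (Submodule.subset_span ⟨i, rfl⟩))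
    (Submodule.mem_sup_right (Submodule.subset_span ⟨i, rfl⟩))

open Matrix in
lemma mulVec_eq_inner {N₁ N₂ : ℕ} (M : Matrix (Fin N₁) (Fin N₂) ℝ)
    (b : EuclideanSpace ℝ (Fin N₂)) (i : Fin N₁) :
    (M *ᵥ b.ofLp) i = inner ℝ (rowE M i) b := by
  simp [mulVec, dotProduct, rowE, PiLp.inner_apply, mul_comm]

lemma rowE_inner {N₁ N₂ : ℕ} (M D : Matrix (Fin N₁) (Fin N₂) ℝ) :
    frobInner M D = ∑ i, inner ℝ (rowE M i) (rowE D i) := by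
  simp [frobInner, rowE, PiLp.inner_apply, mul_comm]

open Matrix in
lemma bessel_mat {N₁ N₂ : ℕ} {ι : Type*} [Fintype ι] (M : Matrix (Fin N₁) (Fin N₂) ℝ)
    (b : ι → EuclideanSpace ℝ (Fin N₂)) (hb : Orthonormal ℝ b) :
    ∑ k, (M *ᵥ (b k).ofLp) ⬝ᵥ (M *ᵥ (b k).ofLp) ≤ frobNorm M ^ 2 := by
  rw [frobNorm_sq, rowE_inner]
  simp only [dotProduct, mulVec_eq_inner]
  rw [Finset.sum_comm]
  refine Finset.sum_le_sum fun i _ => ?_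
  have := hb.sum_inner_products_le (rowE M i) (s := Finset.univ)
  rw [real_inner_self_eq_norm_sq]
  refine le_trans (le_of_eq ?_) this
  refine Finset.sum_congr rfl fun k _ => ?_
  rw [Real.norm_eq_abs, sq_abs, real_inner_comm, sq]

open Matrix in
lemma parseval_mat {N₁ N₂ : ℕ} (M D : Matrix (Fin N₁) (Fin N₂) ℝ) :
    frobInner D M = ∑ k, (M *ᵥ (stdOrthonormalBasis ℝ (rowS M) k).1.ofLp) ⬝ᵥ
      (D *ᵥ (stdOrthonormalBasis ℝ (rowS M) k).1.ofLp) := by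
  rw [rowE_inner]
  simp only [dotProduct, mulVec_eq_inner]
  rw [Finset.sum_comm]
  refine Finset.sum_congr rfl fun i _ => ?_
  have hm : rowE M i ∈ rowS M := Submodule.subset_span ⟨i, rfl⟩
  have h1 := (stdOrthonormalBasis ℝ (rowS M)).sum_repr' ⟨rowE M i, hm⟩
  have h2 := congrArg (fun z : rowS M => inner ℝ (rowE D i) z.1) h1
  simp only [Submodule.coe_sum, Submodule.coe_smul, inner_sum, inner_smul_right,
    Submodule.coe_inner] at h2
  rw [← h2]
  refine Finset.sum_congr rfl fun k _ => ?_
  rw [real_inner_comm (rowE M i)]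

open Matrix in
lemma rank_drop {N₁ N₂ : ℕ} (H : Matrix (Fin N₁) (Fin N₂) ℝ)
    (b : EuclideanSpace ℝ (Fin N₂)) (hb : ‖b‖ = 1) (hbS : b ∈ rowS H) :
    (H - vecMulVec (H *ᵥ b.ofLp) b.ofLp).rank < H.rank := by
  rw [← rowS_finrank, ← rowS_finrank]
  apply Submodule.finrank_lt_finrank_of_lt
  set P := H - vecMulVec (H *ᵥ b.ofLp) b.ofLp with hP
  have hrow : ∀ i, rowE P i = rowE H i - (inner ℝ (rowE H i) b) • b := by
    intro i
    rw [← mulVec_eq_inner]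
    ext j
    simp [rowE, hP, vecMulVec_apply]
  have hle : rowS P ≤ rowS H := by
    refine Submodule.span_le.2 ?_
    rintro _ ⟨i, rfl⟩
    rw [hrow]
    exact Submodule.sub_mem _ (Submodule.subset_span ⟨i, rfl⟩) (Submodule.smul_mem _ _ hbS)
  have hperp : ∀ x ∈ rowS P, inner ℝ x b = 0 := by
    intro x hx
    induction hx using Submodule.span_induction with
    | mem x h =>
      obtain ⟨i, rfl⟩ := h
      rw [hrow, inner_sub_left, inner_smul_left, real_inner_self_eq_norm_sq, hb]
      simp
    | zero => simp
    | add x y _ _ hx hy => rw [inner_add_left, hx, hy, add_zero]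
    | smul a x _ hx => rw [inner_smul_left, hx, mul_zero]
  refine lt_of_le_of_ne hle ?_
  intro heq
  have := hperp b (heq ▸ hbS)
  rw [real_inner_self_eq_norm_sq, hb] at this
  norm_num at this

open Matrix in
lemma dot_orth {N₁ N₂ : ℕ} {H D : Matrix (Fin N₁) (Fin N₂) ℝ} (h : H.transpose * D = 0)
    (a b : Fin N₂ → ℝ) : (H *ᵥ a) ⬝ᵥ (D *ᵥ b) = 0 := by
  rw [← vecMul_transpose, ← dotProduct_mulVec, mulVec_mulVec, h, zero_mulVec, dotProduct_zero]

lemma dot_unit {n : ℕ} (b : EuclideanSpace ℝ (Fin n)) (hb : ‖b‖ = 1) :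
    dotProduct b.ofLp b.ofLp = 1 := by
  have h1 : inner ℝ b b = 1 := by rw [real_inner_self_eq_norm_sq, hb]; norm_num
  rw [PiLp.inner_apply] at h1
  exact h1

lemma rank_vmv {N₁ N₂ : ℕ} (a : Fin N₁ → ℝ) (b : Fin N₂ → ℝ) :
    (Matrix.vecMulVec a b).rank ≤ 1 := Matrix.rank_vecMulVec_le a b

open Matrix in
lemma best_full {N₁ N₂ k : ℕ} {V H : Matrix (Fin N₁) (Fin N₂) ℝ} (h : IsBestRankApprox k V H)
    (b c : EuclideanSpace ℝ (Fin N₂)) (hb : ‖b‖ = 1) (hc : ‖c‖ = 1) (hcS : c ∈ rowS H) :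
    ((V - H) *ᵥ b.ofLp) ⬝ᵥ ((V - H) *ᵥ b.ofLp) ≤ (H *ᵥ c.ofLp) ⬝ᵥ (H *ᵥ c.ofLp) := by
  have ho := best_orth h
  obtain ⟨D, hD⟩ : ∃ D, D = V - H := ⟨_, rfl⟩
  rw [← hD] at ho ⊢
  set g := D *ᵥ b.ofLp with hg
  set f := H *ᵥ c.ofLp with hf
  have h1 : (H - vecMulVec f c.ofLp + vecMulVec g b.ofLp).rank ≤ k := by
    have e1 := rank_drop H c hc hcS
    have e2 := rank_vmv g b.ofLp
    have e3 := rank_add_le_aux (H - vecMulVec f c.ofLp) (vecMulVec g b.ofLp)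
    have e4 := h.1
    rw [← hf] at e1
    omega
  have h2 := pow_le_pow_left₀ (frobNorm_nonneg _) (h.2 _ h1) 2
  have h3 : V - (H - vecMulVec f c.ofLp + vecMulVec g b.ofLp)
      = D + vecMulVec f c.ofLp - vecMulVec g b.ofLp := by rw [hD]; abel
  rw [h3, ← hD, frobNorm_sq, frobNorm_sq] at h2
  have o1 : f ⬝ᵥ (D *ᵥ c.ofLp) = 0 := dot_orth ho _ _
  have o2 : g ⬝ᵥ f = 0 := by rw [dotProduct_comm]; exact dot_orth ho _ _
  have b1 := dot_unit b hb
  have c1 := dot_unit c hc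
  simp only [fi_sub_left, fi_sub_right, fi_add_left, fi_add_right] at h2
  rw [fi_comm (vecMulVec f c.ofLp) D, fi_comm (vecMulVec g b.ofLp) D,
    fi_comm (vecMulVec g b.ofLp) (vecMulVec f c.ofLp)] at h2
  simp only [fi_vecMulVec, vecMulVec_mulVec', b1, c1, dotProduct_smul, o1, o2, one_smul,
    ← hg, smul_zero] at h2
  linarith

open Matrix in
lemma best_deficient {N₁ N₂ k : ℕ} {V H : Matrix (Fin N₁) (Fin N₂) ℝ} (h : IsBestRankApprox k V H)
    (hk : H.rank < k) (b : EuclideanSpace ℝ (Fin N₂)) (hb : ‖b‖ = 1) :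
    ((V - H) *ᵥ b.ofLp) ⬝ᵥ ((V - H) *ᵥ b.ofLp) ≤ 0 := by
  obtain ⟨D, hD⟩ : ∃ D, D = V - H := ⟨_, rfl⟩
  rw [← hD]
  set g := D *ᵥ b.ofLp with hg
  have h1 : (H + vecMulVec g b.ofLp).rank ≤ k := by
    have e2 := rank_vmv g b.ofLp
    have e3 := rank_add_le_aux H (vecMulVec g b.ofLp)
    omega
  have h2 := pow_le_pow_left₀ (frobNorm_nonneg _) (h.2 _ h1) 2
  have h3 : V - (H + vecMulVec g b.ofLp)
      = D - vecMulVec g b.ofLp := by rw [hD]; abel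
  rw [h3, ← hD, frobNorm_sq, frobNorm_sq] at h2
  have b1 := dot_unit b hb
  simp only [fi_sub_left, fi_sub_right] at h2
  rw [fi_comm (vecMulVec g b.ofLp) D] at h2
  simp only [fi_vecMulVec, vecMulVec_mulVec', b1, one_smul, ← hg] at h2
  linarith

open Matrix in
lemma best_op {N₁ N₂ k r : ℕ} {V H : Matrix (Fin N₁) (Fin N₂) ℝ} (h : IsBestRankApprox k V H)
    (X : Matrix (Fin N₁) (Fin N₂) ℝ) (hX : X.rank ≤ r)
    (b : EuclideanSpace ℝ (Fin N₂)) (hb : ‖b‖ = 1) :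
    ((k : ℝ) - r) * (((V - H) *ᵥ b.ofLp) ⬝ᵥ ((V - H) *ᵥ b.ofLp)) ≤ frobNorm (X - H) ^ 2 := by
  have hnn : 0 ≤ ((V - H) *ᵥ b.ofLp) ⬝ᵥ ((V - H) *ᵥ b.ofLp) := by
    unfold dotProduct; exact Finset.sum_nonneg fun i _ => mul_self_nonneg _
  rcases lt_or_eq_of_le h.1 with hk | hk
  · have := best_deficient h hk b hb
    have h0 := le_antisymm this hnn
    rw [h0, mul_zero]; positivity
  · set T := rowS H ⊓ (rowS X)ᗮ with hT
    set B := stdOrthonormalBasis ℝ T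
    have hon : Orthonormal ℝ (fun i => (B i).1) :=
      B.orthonormal.comp_linearIsometry T.subtypeₗᵢ
    have hdim : (k : ℝ) - r ≤ (Module.finrank ℝ T : ℝ) := by
      have e1 := Submodule.finrank_sup_add_finrank_inf_eq (rowS H) (rowS X)ᗮ
      have e2 := Submodule.finrank_add_finrank_orthogonal (rowS X)
      have e3 := Submodule.finrank_le (rowS H ⊔ (rowS X)ᗮ)
      have e4 := rowS_finrank H
      have e5 := rowS_finrank X
      rw [← hT] at e1
      have : k ≤ Module.finrank ℝ T + r := by omega
      have : (k : ℝ) ≤ Module.finrank ℝ T + r := by exact_mod_cast this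
      linarith
    have hbes := bessel_mat (X - H) (fun i => (B i).1) hon
    refine le_trans ?_ hbes
    refine le_trans (mul_le_mul_of_nonneg_right hdim hnn) ?_
    have : (Module.finrank ℝ T : ℝ) * (((V - H) *ᵥ b.ofLp) ⬝ᵥ ((V - H) *ᵥ b.ofLp))
      = ∑ i : Fin (Module.finrank ℝ T), (((V - H) *ᵥ b.ofLp) ⬝ᵥ ((V - H) *ᵥ b.ofLp)) := by
      simp
    rw [this]
    refine Finset.sum_le_sum fun i _ => ?_
    have hmem : (B i).1 ∈ T := (B i).2
    have hx0 : X *ᵥ (B i).1.ofLp = 0 := by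
      ext j
      rw [mulVec_eq_inner]
      exact (Submodule.mem_orthogonal _ _).1 hmem.2 _ (Submodule.subset_span ⟨j, rfl⟩)
    rw [sub_mulVec X H, hx0, zero_sub, neg_dotProduct_neg]
    exact best_full h b (B i).1 hb (hon.1 i) hmem.1

open Matrix in
lemma best_inner {N₁ N₂ k r l : ℕ} {V H : Matrix (Fin N₁) (Fin N₂) ℝ}
    (h : IsBestRankApprox k V H) (hrk : r ≤ k)
    (X : Matrix (Fin N₁) (Fin N₂) ℝ) (hX : X.rank ≤ r)
    (Z M : Matrix (Fin N₁) (Fin N₂) ℝ) (hZ : Z.rank ≤ l) (hM : M.transpose * (V - H) = 0) :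
    ((k : ℝ) - r) * frobInner (V - H) Z ^ 2
      ≤ l * frobNorm (X - H) ^ 2 * frobNorm (Z - M) ^ 2 := by
  rw [parseval_mat]
  set B := stdOrthonormalBasis ℝ (rowS Z)
  have hon : Orthonormal ℝ (fun i => (B i).1) :=
    B.orthonormal.comp_linearIsometry (rowS Z).subtypeₗᵢ
  set D := V - H with hD
  have hsum : ∑ i, (Z *ᵥ (B i).1.ofLp) ⬝ᵥ (D *ᵥ (B i).1.ofLp)
      = ∑ p : _ × Fin N₁, ((Z - M) *ᵥ (B p.1).1.ofLp) p.2 * (D *ᵥ (B p.1).1.ofLp) p.2 := by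
    rw [Fintype.sum_prod_type]
    refine Finset.sum_congr rfl fun i _ => ?_
    have : (M *ᵥ (B i).1.ofLp) ⬝ᵥ (D *ᵥ (B i).1.ofLp) = 0 := dot_orth hM _ _
    change _ = ((Z - M) *ᵥ (B i).1.ofLp) ⬝ᵥ (D *ᵥ (B i).1.ofLp)
    rw [sub_mulVec Z M, sub_dotProduct, this, sub_zero]
  rw [hsum]
  have hcs := Finset.sum_mul_sq_le_sq_mul_sq Finset.univ
    (fun p : _ × Fin N₁ => ((Z - M) *ᵥ (B p.1).1.ofLp) p.2)
    (fun p : _ × Fin N₁ => (D *ᵥ (B p.1).1.ofLp) p.2)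
  have hk : (0 : ℝ) ≤ (k : ℝ) - r := by
    have : (r : ℝ) ≤ k := by exact_mod_cast hrk
    linarith
  refine (mul_le_mul_of_nonneg_left hcs hk).trans ?_
  have h1 := bessel_mat (Z - M) (fun i => (B i).1) hon
  simp only [Fintype.sum_prod_type]
  have conv : ∀ (Q : Matrix (Fin N₁) (Fin N₂) ℝ),
      ∑ i, ∑ j, ((Q *ᵥ (B i).1.ofLp) j) ^ 2
        = ∑ i, (Q *ᵥ (B i).1.ofLp) ⬝ᵥ (Q *ᵥ (B i).1.ofLp) := by
    intro Q; simp [dotProduct, sq]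
  rw [conv, conv]
  have h2 : ((k : ℝ) - r) * ∑ i, (D *ᵥ (B i).1.ofLp) ⬝ᵥ (D *ᵥ (B i).1.ofLp)
      ≤ l * frobNorm (X - H) ^ 2 := by
    rw [Finset.mul_sum]
    refine (Finset.sum_le_sum fun i _ => best_op h X hX (B i).1 (hon.1 i)).trans ?_
    rw [Finset.sum_const, Finset.card_univ, Fintype.card_fin, nsmul_eq_mul, rowS_finrank]
    refine mul_le_mul_of_nonneg_right ?_ (by positivity)
    exact_mod_cast hZ
  have hl : 0 ≤ (l : ℝ) * frobNorm (X - H) ^ 2 := by positivity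
  have h0 : 0 ≤ ∑ i, ((Z - M) *ᵥ (B i).1.ofLp) ⬝ᵥ ((Z - M) *ᵥ (B i).1.ofLp) := by
    refine Finset.sum_nonneg fun i _ => ?_
    unfold dotProduct; exact Finset.sum_nonneg fun i _ => mul_self_nonneg _
  calc _ = (∑ i, ((Z - M) *ᵥ (B i).1.ofLp) ⬝ᵥ ((Z - M) *ᵥ (B i).1.ofLp)) *
        (((k : ℝ) - r) * ∑ i, (D *ᵥ (B i).1.ofLp) ⬝ᵥ (D *ᵥ (B i).1.ofLp)) := by ring
    _ ≤ (∑ i, ((Z - M) *ᵥ (B i).1.ofLp) ⬝ᵥ ((Z - M) *ᵥ (B i).1.ofLp)) *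
        (l * frobNorm (X - H) ^ 2) := mul_le_mul_of_nonneg_left h2 h0
    _ ≤ frobNorm (Z - M) ^ 2 * (l * frobNorm (X - H) ^ 2) := mul_le_mul_of_nonneg_right h1 hl
    _ = _ := by ring

/-- good case, real arithmetic -/
lemma real_good (z ε α β γ p F ip μ w : ℝ) (hγ : 1 ≤ γ) (hα : 0 < α) (hαβ : α ≤ β)
    (hr : β ≤ γ * α) (hz : 0 ≤ z) (hε : 0 ≤ ε) (hF : 0 ≤ F)
    (hgood : 3 * ε ≤ (α - β / (14 * γ ^ 6)) * z)
    (hp : α * z - ε ≤ p)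
    (hip : p - ε - β / (28 * γ ^ 6) * z ≤ ip)
    (hF2 : F ^ 2 = z ^ 2 - 2 * μ * ip + μ ^ 2 * w ^ 2)
    (hμ0 : 0 ≤ μ) (hμ1 : μ * w ^ 2 ≤ p) (hμ2 : p ≤ μ * β ^ 2) :
    F ≤ (1 - 0.46 / γ ^ 2) * z + 5 / β * ε := by
  have hβ : 0 < β := by linarith
  have hγ0 : 0 < γ := by linarith
  set δ := β / (14 * γ ^ 6) with hδ
  have hδ2 : β / (28 * γ ^ 6) = δ / 2 := by rw [hδ]; field_simp; norm_num
  rw [hδ2] at hip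
  have hδ0 : 0 < δ := by rw [hδ]; positivity
  have hδα : δ ≤ α / 14 := by
    rw [hδ, div_le_div_iff₀ (by positivity) (by norm_num)]
    have h6 : γ ≤ γ ^ 6 := le_self_pow₀ hγ (by norm_num)
    nlinarith
  set x := 1 / γ ^ 2 with hx
  have hx0 : 0 < x := by rw [hx]; positivity
  have hx1 : x ≤ 1 := by
    rw [hx, div_le_one (by positivity)]; exact one_le_pow₀ hγ
  have hxθ : x * β ^ 2 ≤ α ^ 2 := by
    rw [hx, div_mul_eq_mul_div, one_mul, div_le_iff₀ (by positivity), ← mul_pow, mul_comm α]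
    exact pow_le_pow_left₀ hβ.le hr 2
  have hη : 0.46 / γ ^ 2 = 0.46 * x := by rw [hx]; ring
  rw [hη]
  have hrhs : 0 ≤ (1 - 0.46 * x) * z + 5 / β * ε := by
    have : 0 ≤ 1 - 0.46 * x := by linarith
    positivity
  refine (abs_le_of_sq_le_sq' ?_ hrhs).2
  -- F² ≤ z² − μ (p − c)
  set c := 2 * ε + δ * z with hc
  have hqc : 0 ≤ α * z - ε - c := by rw [hc]; nlinarith
  have hc0 : 0 ≤ c := by rw [hc]; positivity
  have s1 : F ^ 2 ≤ z ^ 2 - μ * (p - c) := by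
    have : μ * (p - c) ≤ 2 * (μ * ip) - μ * (μ * w ^ 2) := by
      have e1 : μ * (p - c + p) ≤ μ * (2 * ip) :=
        mul_le_mul_of_nonneg_left (by rw [hc]; linarith) hμ0
      have e2 : μ * (μ * w ^ 2) ≤ μ * p := mul_le_mul_of_nonneg_left hμ1 hμ0
      linarith
    rw [hF2]; linarith
  have hpc : 0 ≤ p - c := by linarith
  have s2 : p * (p - c) ≤ β ^ 2 * (μ * (p - c)) := by
    have := mul_le_mul_of_nonneg_right hμ2 hpc
    linarith
  have s3 : (α * z - ε) * (α * z - ε - c) ≤ p * (p - c) := by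
    apply mul_le_mul hp (by linarith) hqc (by linarith)
  have hq : 0 ≤ α * z - ε := by linarith
  have s4 : (α * z - ε) * (13 / 14 * α * z - 3 * ε) ≤ (α * z - ε) * (α * z - ε - c) := by
    apply mul_le_mul_of_nonneg_left _ hq
    have h9 := mul_le_mul_of_nonneg_right hδα hz
    rw [hc]; linarith
  have s5 : β ^ 2 * F ^ 2 ≤ β ^ 2 * z ^ 2 - 13 / 14 * α ^ 2 * z ^ 2 + 4 * α * z * ε := by
    have : β ^ 2 * F ^ 2 ≤ β ^ 2 * (z ^ 2 - μ * (p - c)) :=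
      mul_le_mul_of_nonneg_left s1 (by positivity)
    have h7 : 0 ≤ α * z * ε := by positivity
    have h8 := sq_nonneg ε
    linarith
  have s6 : β ^ 2 * ((1 - 0.46 * x) * z + 5 / β * ε) ^ 2
      = (1 - 0.46 * x) ^ 2 * (β ^ 2 * z ^ 2) + 10 * (1 - 0.46 * x) * (β * z * ε) + 25 * ε ^ 2 := by
    field_simp; ring
  have hb2 : 0 < β ^ 2 := by positivity
  refine le_of_mul_le_mul_left ?_ hb2
  rw [s6]
  refine s5.trans ?_
  have t1 : α * z * ε ≤ β * z * ε := by
    gcongr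
  have t2 : x * β ^ 2 * z ^ 2 ≤ α ^ 2 * z ^ 2 := mul_le_mul_of_nonneg_right hxθ (by positivity)
  have t3 : 0 ≤ β * z * ε := by positivity
  have t4 : (1 - 0.46 * x) ^ 2 * (β ^ 2 * z ^ 2) ≥ (1 - 13 / 14 * x) * (β ^ 2 * z ^ 2) := by
    apply mul_le_mul_of_nonneg_right _ (by positivity)
    have : 0 ≤ x ^ 2 := sq_nonneg x
    linarith
  have t5 : 10 * (1 - 0.46 * x) * (β * z * ε) ≥ 4 * (β * z * ε) :=
    mul_le_mul_of_nonneg_right (by linarith) t3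
  have t6 := sq_nonneg ε
  linarith

lemma real_bad (z ε α β γ p F μ w : ℝ) (hγ : 1 ≤ γ) (hα : 0 < α) (hαβ : α ≤ β)
    (hr : β ≤ γ * α) (hz : 0 ≤ z) (hε : 0 ≤ ε)
    (hbad : (α - β / (14 * γ ^ 6)) * z ≤ 3 * ε)
    (hp : p ≤ β * z + ε)
    (hF : F ≤ z + μ * w)
    (hμ : μ * w ≤ 4 * γ ^ 4 / β * p) :
    F ≤ 24 * γ ^ 8 / β * ε := by
  have hβ : 0 < β := by linarith
  have hγ0 : 0 < γ := by linarith
  set δ := β / (14 * γ ^ 6) with hδ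
  have hδα : δ ≤ α / 14 := by
    rw [hδ, div_le_div_iff₀ (by positivity) (by norm_num)]
    have h6 : γ ≤ γ ^ 6 := le_self_pow₀ hγ (by norm_num)
    nlinarith
  have h1 : β * z ≤ 4 * γ * ε := by
    have : 13 / 14 * (α * z) ≤ 3 * ε := by nlinarith
    have h2 : β * z ≤ γ * (α * z) := by nlinarith
    have h3 : γ * (α * z) ≤ γ * (4 * ε) := mul_le_mul_of_nonneg_left (by linarith) hγ0.le
    linarith
  have hp2 : p ≤ 5 * γ * ε := by nlinarith
  have h4 : z + 4 * γ ^ 4 / β * p ≤ 24 * γ ^ 8 / β * ε := by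
    have e1 : z + 4 * γ ^ 4 / β * p = (β * z + 4 * γ ^ 4 * p) / β := by field_simp
    have e2 : 24 * γ ^ 8 / β * ε = (24 * γ ^ 8 * ε) / β := by ring
    rw [e1, e2]
    apply div_le_div_of_nonneg_right _ hβ.le
    have e3 : γ ^ 4 * p ≤ γ ^ 4 * (5 * γ * ε) := mul_le_mul_of_nonneg_left hp2 (by positivity)
    have e4 : γ ≤ γ ^ 8 := le_self_pow₀ hγ (by norm_num)
    have e5 : γ ^ 5 ≤ γ ^ 8 := pow_le_pow_right₀ hγ (by norm_num)
    have e6 := mul_le_mul_of_nonneg_right e4 hε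
    have e7 := mul_le_mul_of_nonneg_right e5 hε
    nlinarith
  linarith

lemma real_thr (r s γ E F d : ℝ) (hr : 0 < r) (hγ : 1 ≤ γ) (hs : s = 100 * γ ^ 4 * r)
    (hE : 0 ≤ E) (hF : 0 ≤ F) (h1 : E ^ 2 ≤ F ^ 2 + 2 * d)
    (h2 : (s - r) * d ^ 2 ≤ r * E ^ 2 * E ^ 2) :
    E ≤ (1 + 0.122 / γ ^ 2) * F := by
  have hγ0 : 0 < γ := by linarith
  set x := 1 / γ ^ 2 with hx
  have hx0 : 0 < x := by rw [hx]; positivity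
  have hx1 : x ≤ 1 := by
    rw [hx, div_le_one (by positivity)]; exact one_le_pow₀ hγ
  have hη : 0.122 / γ ^ 2 = 0.122 * x := by rw [hx]; ring
  rw [hη]
  have hxg : x ^ 2 * γ ^ 4 = 1 := by rw [hx]; field_simp
  have h4 : (1 : ℝ) ≤ γ ^ 4 := one_le_pow₀ hγ
  have h3 : 99 * γ ^ 4 * d ^ 2 ≤ (E ^ 2) ^ 2 := by
    have : r * (99 * γ ^ 4 * d ^ 2) ≤ r * (E ^ 2) ^ 2 := by
      have : r * (99 * γ ^ 4 * d ^ 2) ≤ (s - r) * d ^ 2 := by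
        rw [hs]
        have : 0 ≤ r * d ^ 2 * (γ ^ 4 - 1) := by
          have : 0 ≤ γ ^ 4 - 1 := by linarith
          positivity
        nlinarith
      nlinarith
    exact le_of_mul_le_mul_left this hr
  have h5 : d ^ 2 ≤ (0.1006 * x * E ^ 2) ^ 2 := by
    have e : x ^ 2 * (99 * γ ^ 4 * d ^ 2) ≤ x ^ 2 * (E ^ 2) ^ 2 :=
      mul_le_mul_of_nonneg_left h3 (by positivity)
    have e2 : x ^ 2 * (99 * γ ^ 4 * d ^ 2) = 99 * d ^ 2 := by linear_combination 99 * d ^ 2 * hxg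
    rw [e2] at e
    have e3 : 0 ≤ x ^ 2 * (E ^ 2) ^ 2 := by positivity
    nlinarith
  have h6 := (abs_le_of_sq_le_sq' h5 (by positivity)).2
  have h7 : (1 - 0.2012 * x) * E ^ 2 ≤ F ^ 2 := by nlinarith
  refine (abs_le_of_sq_le_sq' ?_ (by positivity)).2
  have h8 : 1 ≤ (1 + 0.122 * x) ^ 2 * (1 - 0.2012 * x) := by
    nlinarith [mul_nonneg hx0.le (sub_nonneg.2 hx1), mul_nonneg (sq_nonneg x) (sub_nonneg.2 hx1)]
  calc E ^ 2 ≤ ((1 + 0.122 * x) ^ 2 * (1 - 0.2012 * x)) * E ^ 2 :=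
        le_mul_of_one_le_left (by positivity) h8
    _ = (1 + 0.122 * x) ^ 2 * ((1 - 0.2012 * x) * E ^ 2) := by ring
    _ ≤ (1 + 0.122 * x) ^ 2 * F ^ 2 := mul_le_mul_of_nonneg_left h7 (by positivity)
    _ = _ := by ring

lemma real_final (z ε β γ E F ρ : ℝ) (hγ : 1 ≤ γ) (hβ : 0 < β) (hz : 0 ≤ z) (hε : 0 ≤ ε)
    (hρ : 1 ≤ ρ) (hE : E ≤ (1 + 0.122 / γ ^ 2) * F)
    (hF : F ≤ (1 - 0.46 / γ ^ 2) * z + 24 * γ ^ 8 / β * ε) :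
    E ≤ (1 - (3 - 2 * Real.sqrt 2) / (10 * γ ^ 2)) * z + (96 * ρ * γ ^ 8 / β) * ε := by
  have hγ0 : 0 < γ := by linarith
  set x := 1 / γ ^ 2 with hx
  have hx0 : 0 < x := by rw [hx]; positivity
  have hx1 : x ≤ 1 := by
    rw [hx, div_le_one (by positivity)]; exact one_le_pow₀ hγ
  have e1 : 0.122 / γ ^ 2 = 0.122 * x := by rw [hx]; ring
  have e2 : 0.46 / γ ^ 2 = 0.46 * x := by rw [hx]; ring
  have e3 : (3 - 2 * Real.sqrt 2) / (10 * γ ^ 2) = (3 - 2 * Real.sqrt 2) / 10 * x := by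
    rw [hx]; field_simp
  rw [e1] at hE
  rw [e2] at hF
  rw [e3]
  have hs : 1.4 ≤ Real.sqrt 2 := Real.le_sqrt_of_sq_le (by norm_num)
  set T := γ ^ 8 / β * ε with hT
  have hT0 : 0 ≤ T := by positivity
  have e4 : 24 * γ ^ 8 / β * ε = 24 * T := by rw [hT]; ring
  have e5 : 96 * ρ * γ ^ 8 / β * ε = 96 * ρ * T := by rw [hT]; ring
  rw [e4] at hF
  rw [e5]
  have a1 : E ≤ (1 + 0.122 * x) * ((1 - 0.46 * x) * z + 24 * T) :=
    hE.trans (mul_le_mul_of_nonneg_left hF (by positivity))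
  have a2 : (1 + 0.122 * x) * (1 - 0.46 * x) * z ≤ (1 - (3 - 2 * Real.sqrt 2) / 10 * x) * z := by
    apply mul_le_mul_of_nonneg_right _ hz
    nlinarith
  have a3 : (1 + 0.122 * x) * 24 * T ≤ 96 * ρ * T := by
    apply mul_le_mul_of_nonneg_right _ hT0
    nlinarith
  linarith

lemma l1_nonneg {m : ℕ} (v : Fin m → ℝ) : 0 ≤ l1norm v :=
  Finset.sum_nonneg fun i _ => abs_nonneg _

lemma l1_add {m : ℕ} (v w : Fin m → ℝ) : l1norm (v + w) ≤ l1norm v + l1norm w := by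
  unfold l1norm
  rw [← Finset.sum_add_distrib]
  exact Finset.sum_le_sum fun i _ => abs_add_le _ _

lemma l1_neg {m : ℕ} (v : Fin m → ℝ) : l1norm (-v) = l1norm v := by
  simp [l1norm]

lemma sgn_le {m : ℕ} (v w : Fin m → ℝ) : ∑ i, sgnVec v i * w i ≤ l1norm w := by
  refine Finset.sum_le_sum fun i _ => ?_
  unfold sgnVec
  rcases Real.sign_apply_eq (v i) with h | h | h <;> rw [h]
  · linarith [neg_abs_le (w i)]
  · simp
  · linarith [le_abs_self (w i)]

lemma sgn_self {m : ℕ} (v : Fin m → ℝ) : ∑ i, sgnVec v i * v i = l1norm v := by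
  refine Finset.sum_congr rfl fun i _ => ?_
  unfold sgnVec
  rcases lt_trichotomy (v i) 0 with h | h | h
  · rw [Real.sign_of_neg h, abs_of_neg h]; ring
  · simp [h]
  · rw [Real.sign_of_pos h, abs_of_pos h]; ring


set_option maxHeartbeats 1600000 in
/-- One-step contraction: under the modified rank-restricted isometry property of order
t+s+r (s = 100γ⁴r, t = 800γ¹²s) with ratio β/α ≤ γ, for rank(X) ≤ r, y = 𝓐(X) + e,
rank(X_c) ≤ s, W a best rank-t approximation of 𝓐*(sgn(y − 𝓐(X_c))), μ the stepsize, and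
X' a best rank-s approximation of X_c + μW:
‖X − X'‖_F ≤ ρ‖X − X_c‖_F + d'‖e‖₁, with ρ := 1 − (3 − 2√2)/(10γ²),
ρ' := 1 + √(8r/(s+r)), d' := 96ρ'γ⁸/β. -/
theorem stmt2 {N₁ N₂ m : ℕ} (hN₁ : 0 < N₁) (hN₂ : 0 < N₂) (hm : 0 < m)
    (r s t : ℕ) (hr : 0 < r) (γ : ℝ) (hγ : 1 ≤ γ)
    (hs : (s : ℝ) = 100 * γ ^ 4 * r) (ht : (t : ℝ) = 800 * γ ^ 12 * s)
    (hdim : t + s + r ≤ min N₁ N₂)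
    (A : Matrix (Fin N₁) (Fin N₂) ℝ →ₗ[ℝ] (Fin m → ℝ))
    (Astar : (Fin m → ℝ) →ₗ[ℝ] Matrix (Fin N₁) (Fin N₂) ℝ)
    (hadj : ∀ (u : Fin m → ℝ) (Z : Matrix (Fin N₁) (Fin N₂) ℝ),
      frobInner (Astar u) Z = ∑ i, u i * A Z i)
    (α β : ℝ) (hα : 0 < α) (hαβ : α ≤ β) (hratio : β / α ≤ γ)
    (hRIP : ∀ Z : Matrix (Fin N₁) (Fin N₂) ℝ, Z.rank ≤ t + s + r →
      α * frobNorm Z ≤ l1norm (A Z) ∧ l1norm (A Z) ≤ β * frobNorm Z)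
    (X : Matrix (Fin N₁) (Fin N₂) ℝ) (hX : X.rank ≤ r)
    (e : Fin m → ℝ) (y : Fin m → ℝ) (hy : y = A X + e)
    (Xc : Matrix (Fin N₁) (Fin N₂) ℝ) (hXc : Xc.rank ≤ s)
    (W : Matrix (Fin N₁) (Fin N₂) ℝ)
    (hW : IsBestRankApprox t (Astar (sgnVec (y - A Xc))) W)
    (μ : ℝ)
    (hμ : μ = if W ≠ 0 then
        l1norm (y - A Xc) /
          max (frobNorm W ^ 2) ((1 / (4 * γ ^ 2)) * l1norm (A W) ^ 2 / frobNorm W ^ 2)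
      else 0)
    (X' : Matrix (Fin N₁) (Fin N₂) ℝ) (hX' : IsBestRankApprox s (Xc + μ • W) X') :
    frobNorm (X - X') ≤
      (1 - (3 - 2 * Real.sqrt 2) / (10 * γ ^ 2)) * frobNorm (X - Xc) +
        (96 * (1 + Real.sqrt (8 * (r : ℝ) / ((s : ℝ) + (r : ℝ)))) * γ ^ 8 / β) * l1norm e := by
  have hβ : 0 < β := by linarith
  have hγ0 : 0 < γ := by linarith
  have hβγ : β ≤ γ * α := by rwa [div_le_iff₀ hα] at hratio
  have hrR : (0 : ℝ) < r := by exact_mod_cast hr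
  have hg4 : (1 : ℝ) ≤ γ ^ 4 := one_le_pow₀ hγ
  have hg12 : (1 : ℝ) ≤ γ ^ 12 := one_le_pow₀ hγ
  have hrs100 : 100 * (r : ℝ) ≤ s := by rw [hs]; nlinarith
  have hrsR : (r : ℝ) ≤ s := by linarith
  have hrs : r ≤ s := by exact_mod_cast hrsR
  have hs0 : (0 : ℝ) < s := by linarith
  set Z := X - Xc with hZ
  set v := y - A Xc with hv
  have hvZ : v = A Z + e := by rw [hv, hy, hZ, map_sub]; abel
  set G := Astar (sgnVec v) with hG
  have hZr : Z.rank ≤ s + r := by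
    have := rank_sub_le_aux X Xc
    rw [← hZ] at this
    omega
  have hz0 := frobNorm_nonneg Z
  have hw0 := frobNorm_nonneg W
  have he0 := l1_nonneg e
  have hp0 := l1_nonneg v
  obtain ⟨rz1, rz2⟩ := hRIP Z (by omega)
  obtain ⟨rw1, rw2⟩ := hRIP W (by have := hW.1; omega)
  -- upper and lower bound of the residual
  have hp1 : α * frobNorm Z - l1norm e ≤ l1norm v := by
    have h1 : A Z = v + -e := by rw [hvZ]; abel
    have h2 := l1_add v (-e)
    rw [← h1, l1_neg] at h2
    linarith
  have hp2 : l1norm v ≤ β * frobNorm Z + l1norm e := by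
    have h2 := l1_add (A Z) e
    rw [← hvZ] at h2
    linarith
  have hGZ : l1norm v - l1norm e ≤ frobInner G Z := by
    rw [hG, hadj]
    have h1 : A Z = v - e := by rw [hvZ]; abel
    have h2 := sgn_self v
    have h3 := sgn_le v e
    rw [h1]
    simp only [Pi.sub_apply, mul_sub, Finset.sum_sub_distrib]
    linarith
  have hWorth := best_orth hW
  have hGW : frobInner G W = frobNorm W ^ 2 := by
    have h1 := fi_mul_left (G - W) W 1
    rw [hWorth, Matrix.mul_one, fi_sub_left] at h1
    have h2 : frobInner (0 : Matrix (Fin N₂) (Fin N₂) ℝ) 1 = 0 := by simp [frobInner]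
    rw [h2] at h1
    rw [frobNorm_sq]; linarith
  have hwa : frobNorm W ^ 2 ≤ l1norm (A W) := by
    rw [← hGW, hG, hadj]; exact sgn_le _ _
  have hwβ : frobNorm W ≤ β := by
    rcases hw0.eq_or_lt with h | h
    · rw [← h]; exact hβ.le
    · have : frobNorm W * frobNorm W ≤ β * frobNorm W := by rw [← sq]; exact hwa.trans rw2
      exact le_of_mul_le_mul_right this h
  -- tail
  have htail : |frobInner (G - W) Z| ≤ β / (28 * γ ^ 6) * frobNorm Z := by
    have h1 := best_inner hW (Nat.zero_le t) (0 : Matrix (Fin N₁) (Fin N₂) ℝ) (by simp)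
      Z 0 hZr (by simp)
    have hn : frobNorm ((0 : Matrix (Fin N₁) (Fin N₂) ℝ) - W) = frobNorm W := by
      simp [frobNorm]
    rw [hn, sub_zero, Nat.cast_zero, sub_zero, ht, Nat.cast_add] at h1
    apply abs_le_of_sq_le_sq _ (by positivity)
    have e1 : (s + r : ℝ) ≤ 1.01 * s := by linarith
    have e2 : frobNorm W ^ 2 ≤ β ^ 2 := pow_le_pow_left₀ hw0 hwβ 2
    have e3 : (s + r : ℝ) * frobNorm W ^ 2 * frobNorm Z ^ 2 ≤ 1.01 * s * β ^ 2 * frobNorm Z ^ 2 := by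
      apply mul_le_mul_of_nonneg_right _ (by positivity)
      exact mul_le_mul e1 e2 (by positivity) (by positivity)
    have e4 : 800 * γ ^ 12 * frobInner (G - W) Z ^ 2 ≤ 1.01 * β ^ 2 * frobNorm Z ^ 2 := by
      apply le_of_mul_le_mul_left _ hs0
      linarith
    have e5 : (β / (28 * γ ^ 6) * frobNorm Z) ^ 2 = (β ^ 2 * frobNorm Z ^ 2) / (784 * γ ^ 12) := by
      field_simp; ring
    rw [e5, le_div_iff₀ (by positivity)]
    have e6 : 0 ≤ β ^ 2 * frobNorm Z ^ 2 := by positivity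
    linarith
  have hip : l1norm v - l1norm e - β / (28 * γ ^ 6) * frobNorm Z ≤ frobInner W Z := by
    rw [fi_sub_left] at htail
    have := (abs_le.1 htail).2
    linarith
  -- the step size
  have hμ0 : 0 ≤ μ := by
    rw [hμ]; split_ifs
    · positivity
    · exact le_rfl
  have hμfacts : μ * frobNorm W ≤ 4 * γ ^ 4 / β * l1norm v ∧ μ * frobNorm W ^ 2 ≤ l1norm v ∧
      (W ≠ 0 → l1norm v ≤ μ * β ^ 2) := by
    by_cases hW0 : W = 0
    · have : μ = 0 := by rw [hμ]; simp [hW0]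
      rw [this]
      refine ⟨?_, ?_, fun h => absurd hW0 h⟩
      · rw [zero_mul]; positivity
      · rw [zero_mul]; exact hp0
    · rw [if_pos hW0] at hμ
      have hwpos : 0 < frobNorm W := by
        refine lt_of_le_of_ne hw0 (fun h => hW0 (fi_self_eq_zero W ?_))
        rw [← frobNorm_sq, ← h]; norm_num
      set a := l1norm (A W) with ha
      set w := frobNorm W with hw
      set M := max (w ^ 2) ((1 / (4 * γ ^ 2)) * a ^ 2 / w ^ 2) with hM
      have hM1 : w ^ 2 ≤ M := le_max_left _ _
      have hM2 : (1 / (4 * γ ^ 2)) * a ^ 2 / w ^ 2 ≤ M := le_max_right _ _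
      have hM0 : 0 < M := lt_of_lt_of_le (by positivity) hM1
      have hμM : μ * M = l1norm v := by rw [hμ]; field_simp
      have ha2 : α ^ 2 * w ^ 2 ≤ a ^ 2 := by
        rw [← mul_pow]; exact pow_le_pow_left₀ (by positivity) rw1 2
      have ha3 : a ^ 2 ≤ β ^ 2 * w ^ 2 := by
        rw [← mul_pow]; exact pow_le_pow_left₀ (l1_nonneg _) rw2 2
      have hM3 : α ^ 2 / (4 * γ ^ 2) ≤ M := by
        refine le_trans ?_ hM2
        rw [le_div_iff₀ (by positivity)]
        calc α ^ 2 / (4 * γ ^ 2) * w ^ 2 = 1 / (4 * γ ^ 2) * (α ^ 2 * w ^ 2) := by ring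
          _ ≤ _ := mul_le_mul_of_nonneg_left ha2 (by positivity)
      have hg2 : (1 : ℝ) ≤ γ ^ 2 := one_le_pow₀ hγ
      have hM4 : M ≤ β ^ 2 := by
        apply max_le
        · exact pow_le_pow_left₀ hw0 hwβ 2
        · rw [div_le_iff₀ (by positivity)]
          refine le_trans ?_ ha3
          apply mul_le_of_le_one_left (by positivity)
          rw [div_le_one (by positivity)]
          linarith
      refine ⟨?_, ?_, fun _ => ?_⟩
      · have h1 : μ * (α ^ 2 / (4 * γ ^ 2)) ≤ l1norm v := by
          rw [← hμM]; exact mul_le_mul_of_nonneg_left hM3 hμ0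
        have h2 : β ^ 2 ≤ γ ^ 2 * α ^ 2 := by
          rw [← mul_pow]; exact pow_le_pow_left₀ hβ.le hβγ 2
        have h3 : μ * β ^ 2 ≤ 4 * γ ^ 4 * l1norm v := by
          calc μ * β ^ 2 ≤ μ * (γ ^ 2 * α ^ 2) := mul_le_mul_of_nonneg_left h2 hμ0
            _ = 4 * γ ^ 4 * (μ * (α ^ 2 / (4 * γ ^ 2))) := by field_simp
            _ ≤ _ := mul_le_mul_of_nonneg_left h1 (by positivity)
        calc μ * w ≤ μ * β := mul_le_mul_of_nonneg_left hwβ hμ0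
          _ = (μ * β ^ 2) / β := by field_simp
          _ ≤ (4 * γ ^ 4 * l1norm v) / β := div_le_div_of_nonneg_right h3 hβ.le
          _ = _ := by ring
      · rw [← hμM]; exact mul_le_mul_of_nonneg_left hM1 hμ0
      · rw [← hμM]; exact mul_le_mul_of_nonneg_left hM4 hμ0
  obtain ⟨hμw, hμw2, hμβ⟩ := hμfacts
  set V := Xc + μ • W with hV
  have hXV : X - V = Z - μ • W := by rw [hV, hZ]; abel
  have hF2 : frobNorm (X - V) ^ 2
      = frobNorm Z ^ 2 - 2 * μ * frobInner W Z + μ ^ 2 * frobNorm W ^ 2 := by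
    rw [hXV, frobNorm_sq, frobNorm_sq Z, frobNorm_sq W]
    generalize Z = Q
    rw [fi_sub_left, fi_sub_right, fi_sub_right, fi_smul_left, fi_smul_left, fi_smul_right,
      fi_smul_right, fi_comm Q W]
    ring
  have hF0 := frobNorm_nonneg (X - V)
  have hF1 : frobNorm (X - V) ≤ frobNorm Z + μ * frobNorm W := by
    refine (abs_le_of_sq_le_sq' ?_ (by positivity)).2
    rw [hF2]
    have h1 := fi_cs (-W) Z
    have h2 : frobNorm (-W) = frobNorm W := by simp [frobNorm]
    have h3 : frobInner (-W) Z = - frobInner W Z := by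
      have := fi_smul_left (-1) W Z
      rw [neg_one_smul] at this; linarith
    rw [h2, h3] at h1
    have h4 := mul_le_mul_of_nonneg_left h1 hμ0
    linarith
  have hF : frobNorm (X - V) ≤ (1 - 0.46 / γ ^ 2) * frobNorm Z + 24 * γ ^ 8 / β * l1norm e := by
    rcases le_total ((α - β / (14 * γ ^ 6)) * frobNorm Z) (3 * l1norm e) with hb | hg
    · have h1 := real_bad _ _ α β γ _ _ _ _ hγ hα hαβ hβγ hz0 he0 hb hp2 hF1 hμw
      have h2 : 0 ≤ (1 - 0.46 / γ ^ 2) * frobNorm Z := by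
        apply mul_nonneg _ hz0
        have hg2 : (1 : ℝ) ≤ γ ^ 2 := one_le_pow₀ hγ
        have : 0.46 / γ ^ 2 ≤ 1 := by rw [div_le_one (by positivity)]; linarith
        linarith
      linarith
    · have hμ2 : l1norm v ≤ μ * β ^ 2 := by
        by_cases hW0 : W = 0
        · -- degenerate: the residual vanishes
          have hi0 : frobInner W Z = 0 := by
            rw [hW0]; simp [frobInner]
          rw [hi0] at hip
          have e1 : β / (28 * γ ^ 6) = β / (14 * γ ^ 6) / 2 := by field_simp; norm_num
          rw [e1] at hip
          have e2 : 0 ≤ β / (14 * γ ^ 6) * frobNorm Z := by positivity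
          have : l1norm v ≤ 0 := by nlinarith
          exact this.trans (by positivity)
        · exact hμβ hW0
      have h1 := real_good _ _ α β γ _ _ _ _ _ hγ hα hαβ hβγ hz0 he0 hF0 hg hp1 hip hF2 hμ0
        hμw2 hμ2
      have h2 : 5 / β * l1norm e ≤ 24 * γ ^ 8 / β * l1norm e := by
        apply mul_le_mul_of_nonneg_right _ he0
        apply div_le_div_of_nonneg_right _ hβ.le
        have : (1 : ℝ) ≤ γ ^ 8 := one_le_pow₀ hγ
        linarith
      linarith
  -- thresholding
  have hX'orth := best_orth hX'
  have hE1 : frobNorm (X - X') ^ 2 ≤ frobNorm (X - V) ^ 2 + 2 * frobInner (V - X') X := by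
    have h0 : frobInner (V - X') X' = 0 := by
      have h1 := fi_mul_left (V - X') X' 1
      rw [hX'orth, Matrix.mul_one] at h1
      rw [h1]; simp [frobInner]
    have h2 := fi_self_nonneg (V - X')
    rw [frobNorm_sq, frobNorm_sq]
    generalize V = Q at *
    simp only [fi_sub_left, fi_sub_right] at *
    rw [fi_comm X' X, fi_comm Q X]
    rw [fi_comm X' Q] at h2
    linarith
  have hE2 := best_inner hX' hrs X hX X X' hX hX'orth
  have hE := real_thr r s γ _ _ _ hrR hγ hs (frobNorm_nonneg (X - X')) hF0 hE1 hE2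
  exact real_final _ _ β γ _ _ _ hγ hβ hz0 he0
    (le_add_of_nonneg_right (Real.sqrt_nonneg _)) hE hF
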